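/- arXiv:2501.14716 — 3 statements merged into one kernel-verified Lean document; each statement's English description precedes it below -/
import Mathlib

section
/- Let A be an associative unital real algebra, let h ≥ 1 be an integer, and let a, b ∈ A be commuting elements (a·b = b·a). Define the Clifford–Appell elements P_k := Σ_{j=0}^{k} C_j^k(2h+1) · a^{k−j} · b^j and the harmonic elements H_k := Σ_{j=0}^{k} T_j^k(2h+1) · a^{k−j} · b^j. Then for every integer ℓ ≥ 0: binom(ℓ+1+2h, ℓ+1) · P_{ℓ+1} − binom(ℓ+2h, ℓ) · a · P_ℓ = binom(ℓ+2h, 2h−1) · H_{ℓ+1}. -/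
/-- Pochhammer (ascending factorial) symbol `(a)_m = a(a+1)⋯(a+m−1)` over `ℚ`. -/
noncomputable def poch (a : ℚ) (m : ℕ) : ℚ := Polynomial.eval a (ascPochhammer ℚ m)

/-- Clifford–Appell coefficient `C_ℓ^k(n)` with `n = 2h+1`:
`binom(k,ℓ)·((n+1)/2)_{k−ℓ}·((n−1)/2)_ℓ/(n)_k`. -/
noncomputable def Ccoef (h k l : ℕ) : ℚ :=
  (k.choose l : ℚ) * poch ((h : ℚ) + 1) (k - l) * poch (h : ℚ) l / poch (2 * (h : ℚ) + 1) k

/-- Harmonic coefficient `T_ℓ^k(n)` with `n = 2h+1`: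
`binom(k,ℓ)·((n−1)/2)_{k−ℓ}·((n−1)/2)_ℓ/(n−1)_k`. -/
noncomputable def Tcoef (h k l : ℕ) : ℚ :=
  (k.choose l : ℚ) * poch (h : ℚ) (k - l) * poch (h : ℚ) l / poch (2 * (h : ℚ)) k

/-- Clifford–Appell element `P_k = Σ_{j=0}^{k} C_j^k(2h+1) • a^{k−j} b^j` of a real algebra. -/
noncomputable def PApp {A : Type*} [Ring A] [Algebra ℝ A] (h : ℕ) (a b : A) (k : ℕ) : A :=
  ∑ j ∈ Finset.range (k + 1), ((Ccoef h k j : ℝ)) • (a ^ (k - j) * b ^ j)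

/-- Harmonic element `H_k = Σ_{j=0}^{k} T_j^k(2h+1) • a^{k−j} b^j` of a real algebra. -/
noncomputable def HApp {A : Type*} [Ring A] [Algebra ℝ A] (h : ℕ) (a b : A) (k : ℕ) : A :=
  ∑ j ∈ Finset.range (k + 1), ((Tcoef h k j : ℝ)) • (a ^ (k - j) * b ^ j)

theorem poch_natCast_add_one (n k : ℕ) :
    poch ((n : ℚ) + 1) k = (k.factorial : ℚ) * ((n + k).choose k : ℚ) := by
  have key := ascPochhammer_nat_eq_ascFactorial (n + 1) k
  rw [Nat.ascFactorial_eq_factorial_mul_choose] at key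
  rw [poch, ← Nat.cast_add_one, ← ascPochhammer_eval_cast, key, Nat.cast_mul]

theorem poch_succ_left (x : ℚ) (m : ℕ) : poch x (m + 1) = x * poch (x + 1) m := by
  simp [poch, ascPochhammer_succ_left]

theorem poch_succ_right (x : ℚ) (m : ℕ) : poch x (m + 1) = poch x m * (x + m) :=
  ascPochhammer_succ_eval m x

/-- Cancelling the Pochhammer denominator `(n+1)_k` against `binom(n+k,k)`. -/
theorem choose_mul_div_poch (n k j : ℕ) (hj : j ≤ k) (u v : ℚ) :
    ((n + k).choose k : ℚ) * ((k.choose j : ℚ) * u * v / poch ((n : ℚ) + 1) k)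
      = u / ((k - j).factorial : ℚ) * (v / (j.factorial : ℚ)) := by
  have hpos : ((n + k).choose k : ℚ) ≠ 0 :=
    Nat.cast_ne_zero.mpr (Nat.choose_pos (Nat.le_add_left k n)).ne'
  rw [poch_natCast_add_one, Nat.cast_choose ℚ hj]
  have hk : (k.factorial : ℚ) ≠ 0 := Nat.cast_ne_zero.mpr k.factorial_ne_zero
  field_simp

theorem choose_mul_Ccoef (h k j : ℕ) (hj : j ≤ k) :
    ((k + 2 * h).choose k : ℚ) * Ccoef h k j
      = poch ((h : ℚ) + 1) (k - j) / ((k - j).factorial : ℚ)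
        * (poch (h : ℚ) j / (j.factorial : ℚ)) := by
  rw [← choose_mul_div_poch (2 * h) k j hj, Ccoef, add_comm k]
  push_cast
  rfl

theorem choose_mul_Tcoef (h l j : ℕ) (hh : 1 ≤ h) (hj : j ≤ l + 1) :
    ((l + 2 * h).choose (2 * h - 1) : ℚ) * Tcoef h (l + 1) j
      = poch (h : ℚ) (l + 1 - j) / ((l + 1 - j).factorial : ℚ)
        * (poch (h : ℚ) j / (j.factorial : ℚ)) := by
  have hsum : l + 2 * h = 2 * h - 1 + (l + 1) := by omega
  have hcast : ((2 * h - 1 : ℕ) : ℚ) + 1 = 2 * (h : ℚ) := by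
    rw [← Nat.cast_add_one, Nat.sub_add_cancel (by omega)]
    push_cast
    rfl
  rw [← choose_mul_div_poch (2 * h - 1) (l + 1) j hj, Tcoef, hcast, hsum,
    Nat.choose_symm_add]

/-- Pascal's rule for the quotients `(x)_m / m!`. -/
theorem poch_div_factorial_pascal (x : ℚ) (m : ℕ) :
    poch (x + 1) (m + 1) / ((m + 1).factorial : ℚ) - poch (x + 1) m / (m.factorial : ℚ)
      = poch x (m + 1) / ((m + 1).factorial : ℚ) := by
  rw [poch_succ_right (x + 1), poch_succ_left x, Nat.factorial_succ]
  have hm : (m.factorial : ℚ) ≠ 0 := Nat.cast_ne_zero.mpr m.factorial_ne_zero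
  have hm1 : (m : ℚ) + 1 ≠ 0 := Nat.cast_add_one_ne_zero m
  push_cast
  field_simp
  ring

theorem choose_mul_Ccoef_sub (h l j : ℕ) (hh : 1 ≤ h) (hj : j ≤ l) :
    ((l + 1 + 2 * h).choose (l + 1) : ℚ) * Ccoef h (l + 1) j
      - ((l + 2 * h).choose l : ℚ) * Ccoef h l j
      = ((l + 2 * h).choose (2 * h - 1) : ℚ) * Tcoef h (l + 1) j := by
  rw [choose_mul_Ccoef h (l + 1) j (by omega), choose_mul_Ccoef h l j hj,
    choose_mul_Tcoef h l j hh (by omega), Nat.sub_add_comm hj, ← sub_mul,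
    poch_div_factorial_pascal]

theorem choose_mul_Ccoef_self (h l : ℕ) (hh : 1 ≤ h) :
    ((l + 1 + 2 * h).choose (l + 1) : ℚ) * Ccoef h (l + 1) (l + 1)
      = ((l + 2 * h).choose (2 * h - 1) : ℚ) * Tcoef h (l + 1) (l + 1) := by
  rw [choose_mul_Ccoef h (l + 1) (l + 1) le_rfl, choose_mul_Tcoef h l (l + 1) hh le_rfl]
  simp [poch]

/-- For commuting `a, b` in an associative unital real algebra `A` and `h ≥ 1`, `ℓ ≥ 0`:
`binom(ℓ+1+2h, ℓ+1)·P_{ℓ+1} − binom(ℓ+2h, ℓ)·a·P_ℓ = binom(ℓ+2h, 2h−1)·H_{ℓ+1}`. -/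
theorem statement2 {A : Type*} [Ring A] [Algebra ℝ A] (h : ℕ) (hh : 1 ≤ h)
    (a b : A) (hab : a * b = b * a) (l : ℕ) :
    (((l + 1 + 2 * h).choose (l + 1) : ℝ)) • PApp h a b (l + 1)
      - (((l + 2 * h).choose l : ℝ)) • (a * PApp h a b l)
      = (((l + 2 * h).choose (2 * h - 1) : ℝ)) • HApp h a b (l + 1) := by
  unfold PApp HApp
  rw [Finset.sum_range_succ _ (l + 1), Finset.sum_range_succ _ (l + 1), smul_add, smul_add,
    add_sub_right_comm, Finset.mul_sum, Finset.smul_sum, Finset.smul_sum, Finset.smul_sum,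
    ← Finset.sum_sub_distrib]
  congr 1
  · refine Finset.sum_congr rfl fun j hj => ?_
    have hjl : j ≤ l := Nat.lt_succ_iff.mp (Finset.mem_range.mp hj)
    have key : ((l + 1 + 2 * h).choose (l + 1) : ℝ) * (Ccoef h (l + 1) j : ℝ)
        - ((l + 2 * h).choose l : ℝ) * (Ccoef h l j : ℝ)
        = ((l + 2 * h).choose (2 * h - 1) : ℝ) * (Tcoef h (l + 1) j : ℝ) := by
      exact_mod_cast congrArg (Rat.cast : ℚ → ℝ) (choose_mul_Ccoef_sub h l j hh hjl)
    rw [mul_smul_comm, ← mul_assoc, ← pow_succ', ← Nat.sub_add_comm hjl, smul_smul, smul_smul,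
      smul_smul, ← sub_smul, key]
  · have key : ((l + 1 + 2 * h).choose (l + 1) : ℝ) * (Ccoef h (l + 1) (l + 1) : ℝ)
        = ((l + 2 * h).choose (2 * h - 1) : ℝ) * (Tcoef h (l + 1) (l + 1) : ℝ) := by
      exact_mod_cast congrArg (Rat.cast : ℚ → ℝ) (choose_mul_Ccoef_self h l hh)
    rw [smul_smul, smul_smul, key]
end

section
/- Let s, x ∈ ℍ with Q_{c,s}(x) := s² − 2(re x)·s + ‖x‖² ≠ 0, and let m ∈ ℕ. Define G : ℍ → ℍ by G(y) = (s² − 2(re y)·s + ‖y‖²)^{−m}. Then G is (real) differentiable at x and (D̄ G)(x) := ∂₀G(x) − i·∂₁G(x) − j·∂₂G(x) − k·∂₃G(x) = 2m · (s − x̄) · Q_{c,s}(x)^{−m−1}. -/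
open Quaternion

/-- The basis quaternion `i`. -/
def qi : ℍ[ℝ] := ⟨0, 1, 0, 0⟩
/-- The basis quaternion `j`. -/
def qj : ℍ[ℝ] := ⟨0, 0, 1, 0⟩
/-- The basis quaternion `k`. -/
def qk : ℍ[ℝ] := ⟨0, 0, 0, 1⟩

/-- The conjugate Cauchy–Fueter operator
`(D̄ G)(x) = ∂₀G(x) − i·∂₁G(x) − j·∂₂G(x) − k·∂₃G(x)`, where `∂_μG(x)` is the real Fréchet
derivative of `G` at `x` applied to the basis quaternion `e_μ`. -/
noncomputable def DiracBar (G : ℍ[ℝ] → ℍ[ℝ]) (x : ℍ[ℝ]) : ℍ[ℝ] :=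
  fderiv ℝ G x 1 - qi * fderiv ℝ G x qi - qj * fderiv ℝ G x qj - qk * fderiv ℝ G x qk

/-- The commutative pseudo-Cauchy kernel `Q_{c,s}(y) = s² − 2(re y)·s + ‖y‖²`. -/
noncomputable def Qcs (s y : ℍ[ℝ]) : ℍ[ℝ] :=
  s ^ 2 - 2 * ((y.re : ℝ) : ℍ[ℝ]) * s + ((‖y‖ ^ 2 : ℝ) : ℍ[ℝ])

open ContinuousLinearMap in
/-- The derivative of `f ^ (-m)` at a point where the derivative of `f` commutes with the value
of `f`. -/
theorem HasFDerivAt.zpow_neg_natCast_of_commute {𝕜 E R : Type*} [NontriviallyNormedField 𝕜]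
    [NormedAddCommGroup E] [NormedSpace 𝕜 E] [NormedDivisionRing R] [NormedAlgebra 𝕜 R]
    [CompleteSpace R] {f : E → R} {f' : E →L[𝕜] R} {x : E} (hf : HasFDerivAt f f' x)
    (hx : f x ≠ 0) (hcomm : ∀ h, Commute (f' h) (f x)) (m : ℕ) :
    HasFDerivAt (fun y => f y ^ (-(m : ℤ)))
      (-(m : 𝕜) • ((ContinuousLinearMap.mul 𝕜 R).flip (f x ^ (-(m : ℤ) - 1))).comp f') x := by
  induction m with
  | zero => simpa using hasFDerivAt_const (1 : R) x
  | succ m ih =>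
    have hinv : HasFDerivAt (fun y => (f y)⁻¹) ((-mulLeftRight 𝕜 R (f x)⁻¹ (f x)⁻¹).comp f') x :=
      (hasFDerivAt_inv' hx).comp x hf
    have hpow (a : R) : a ^ (-((m + 1 : ℕ) : ℤ)) = a ^ (-(m : ℤ)) * a⁻¹ := by
      simp only [zpow_neg, zpow_natCast, pow_succ', mul_inv_rev]
    simp_rw [hpow]
    refine (ih.mul' hinv).congr_fderiv ?_
    ext h
    have hleft : f x ^ (-(m : ℤ)) * ((f x)⁻¹ * f' h * (f x)⁻¹)
        = f' h * f x ^ (-((m + 1 : ℕ) : ℤ) - 1) := by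
      rw [← ((hcomm h).inv_right₀).eq, ← mul_assoc, ← mul_assoc,
        ← ((hcomm h).zpow_right₀ _).eq, mul_assoc, mul_assoc, ← zpow_neg_one, ← zpow_add₀ hx,
        ← zpow_add₀ hx]
      congr 2
      push_cast
      ring
    have hright : f' h * f x ^ (-(m : ℤ) - 1) * (f x)⁻¹
        = f' h * f x ^ (-((m + 1 : ℕ) : ℤ) - 1) := by
      rw [mul_assoc, ← zpow_neg_one, ← zpow_add₀ hx]
      congr 2
      push_cast
      ring
    simp only [add_apply, smul_apply, neg_apply, comp_apply, flip_apply, mul_apply',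
      mulLeftRight_apply, smul_eq_mul, MulOpposite.smul_eq_mul_unop, MulOpposite.unop_op, mul_neg,
      smul_mul_assoc, hleft, hright]
    push_cast
    module

theorem Qcs_eq_inner (s y : ℍ[ℝ]) :
    Qcs s y = s ^ 2 - (2 * inner ℝ 1 y) • s + (‖y‖ ^ 2) • (1 : ℍ[ℝ]) := by
  rw [Qcs, real_inner_comm, Quaternion.inner_def, star_one, mul_one, mul_smul,
    ← Quaternion.coe_mul_eq_smul y.re, ← Quaternion.coe_mul_eq_smul (‖y‖ ^ 2), mul_one, mul_assoc,
    two_smul, two_mul]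

/-- The Fréchet derivative `h ↦ 2⟨x, h⟩ − 2(re h)·s` of `Qcs s` at `x`. -/
noncomputable def fderivQcs (s x : ℍ[ℝ]) : ℍ[ℝ] →L[ℝ] ℍ[ℝ] :=
  (2 • innerSL ℝ x).smulRight 1 - (2 • innerSL ℝ 1).smulRight s

theorem fderivQcs_apply (s x h : ℍ[ℝ]) :
    fderivQcs s x h = ((2 * (x * star h).re : ℝ) : ℍ[ℝ]) - ((2 * h.re : ℝ) : ℍ[ℝ]) * s := by
  rw [Quaternion.coe_mul_eq_smul]
  ext <;> simp [fderivQcs, Quaternion.inner_def, mul_add]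

theorem hasFDerivAt_Qcs (s x : ℍ[ℝ]) : HasFDerivAt (Qcs s) (fderivQcs s x) x := by
  have hre : HasFDerivAt (fun y : ℍ[ℝ] => 2 * inner ℝ 1 y) (2 • innerSL ℝ (1 : ℍ[ℝ])) x := by
    simpa using! (innerSL ℝ (1 : ℍ[ℝ])).hasFDerivAt.const_smul (2 : ℕ) (x := x)
  have hnorm : HasFDerivAt (fun y : ℍ[ℝ] => ‖y‖ ^ 2) (2 • innerSL ℝ x) x :=
    (hasStrictFDerivAt_norm_sq x).hasFDerivAt
  rw [funext (Qcs_eq_inner s)]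
  refine (((hasFDerivAt_const (s ^ 2) x).sub (hre.smul_const s)).add
    (hnorm.smul_const 1)).congr_fderiv ?_
  rw [fderivQcs]
  abel

theorem commute_Qcs_self (s y : ℍ[ℝ]) : Commute s (Qcs s y) := by
  rw [Qcs_eq_inner]
  exact (((Commute.refl s).pow_right 2).sub_right ((Commute.refl s).smul_right _)).add_right
    ((Commute.one_right s).smul_right _)

theorem commute_fderivQcs (s x h : ℍ[ℝ]) : Commute (fderivQcs s x h) (Qcs s x) := by
  rw [fderivQcs_apply]
  exact (Quaternion.coe_commute _ _).sub_left
    ((Quaternion.coe_commute _ _).mul_left (commute_Qcs_self s x))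

theorem sum_star_basis_mul_fderivQcs (s x : ℍ[ℝ]) :
    fderivQcs s x 1 - qi * fderivQcs s x qi - qj * fderivQcs s x qj - qk * fderivQcs s x qk
      = (-2 : ℝ) • (s - star x) := by
  simp only [fderivQcs_apply]
  ext <;>
    simp only [Quaternion.re_sub, Quaternion.imI_sub, Quaternion.imJ_sub, Quaternion.imK_sub,
      Quaternion.re_mul, Quaternion.imI_mul, Quaternion.imJ_mul, Quaternion.imK_mul,
      Quaternion.re_star, Quaternion.imI_star, Quaternion.imJ_star, Quaternion.imK_star,
      Quaternion.re_coe, Quaternion.imI_coe, Quaternion.imJ_coe, Quaternion.imK_coe,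
      Quaternion.re_one, Quaternion.imI_one, Quaternion.imJ_one, Quaternion.imK_one,
      Quaternion.re_smul, Quaternion.imI_smul, Quaternion.imJ_smul, Quaternion.imK_smul,
      smul_eq_mul] <;>
    simp only [qi, qj, qk] <;>
    ring

/-- For `Q_{c,s}(x) ≠ 0` and `m ∈ ℕ`, the map `G(y) = Q_{c,s}(y)^{−m}` is real differentiable
at `x` and `(D̄ G)(x) = 2m·(s − x̄)·Q_{c,s}(x)^{−m−1}`. -/
theorem statement11 (s x : ℍ[ℝ]) (hQ : Qcs s x ≠ 0) (m : ℕ) :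
    DifferentiableAt ℝ (fun y => Qcs s y ^ (-(m : ℤ))) x ∧
    DiracBar (fun y => Qcs s y ^ (-(m : ℤ))) x
      = ((2 * (m : ℝ) : ℝ) : ℍ[ℝ]) * ((s - star x) * Qcs s x ^ (-(m : ℤ) - 1)) := by
  have hG := (hasFDerivAt_Qcs s x).zpow_neg_natCast_of_commute hQ (commute_fderivQcs s x) m
  refine ⟨hG.differentiableAt, ?_⟩
  simp only [DiracBar, hG.fderiv, smul_apply, ContinuousLinearMap.comp_apply,
    ContinuousLinearMap.flip_apply, ContinuousLinearMap.mul_apply', mul_smul_comm, ← mul_assoc,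
    ← smul_sub, ← sub_mul]
  rw [sum_star_basis_mul_fderivQcs, Quaternion.coe_mul_eq_smul, smul_mul_assoc, smul_mul_assoc,
    smul_smul]
  congr 1
  ring
end

section
/- Let s ∈ ℍ and define S : ℍ → ℍ by S(y) = (s − ȳ) · (s² − 2(re y)·s + ‖y‖²)⁻¹ (the left slice-hyperholomorphic Cauchy kernel in form II). Then on the open set U = {y ∈ ℍ : s² − 2(re y)·s + ‖y‖² ≠ 0} the function S is infinitely differentiable, and for every x ∈ U its Laplacian satisfies (Δ S)(x) := Σ_{μ=0}^{3} ∂_μ(∂_μ S)(x) = −4 · (s − x̄) · (s² − 2(re x)·s + ‖x‖²)^{−2}. -/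
open Quaternion

/-- The Laplacian `(Δ F)(x) = Σ_{μ=0}^{3} ∂_μ(∂_μ F)(x)`, where `∂_μF(x)` is the real Fréchet
derivative of `F` at `x` applied to the basis quaternion `e_μ` (`e₀ = 1, e₁ = i, e₂ = j,
e₃ = k`). -/
noncomputable def lap (F : ℍ[ℝ] → ℍ[ℝ]) (x : ℍ[ℝ]) : ℍ[ℝ] :=
  fderiv ℝ (fun y => fderiv ℝ F y 1) x 1
    + fderiv ℝ (fun y => fderiv ℝ F y qi) x qi
    + fderiv ℝ (fun y => fderiv ℝ F y qj) x qj
    + fderiv ℝ (fun y => fderiv ℝ F y qk) x qk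

/-- The directional derivative of `Qcs s` at `y` in the direction `e`. -/
noncomputable def QcsDir (s y e : ℍ[ℝ]) : ℍ[ℝ] :=
  (2 * inner ℝ y e : ℝ) • (1 : ℍ[ℝ]) - (2 * e.re) • s

lemma Qcs_eq_smul (s y : ℍ[ℝ]) :
    Qcs s y = s ^ 2 - (2 * inner ℝ (1 : ℍ[ℝ]) y : ℝ) • s + (inner ℝ y y : ℝ) • (1 : ℍ[ℝ]) := by
  have h : (inner ℝ (1 : ℍ[ℝ]) y : ℝ) = y.re := by simp [Quaternion.inner_def]
  have h2 : (2 : ℍ[ℝ]) = ((2 : ℝ) : ℍ[ℝ]) := by norm_cast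
  rw [Qcs, h, real_inner_self_eq_norm_sq, h2, ← Quaternion.coe_mul, Quaternion.coe_mul_eq_smul,
    ← Quaternion.coe_mul_eq_smul (‖y‖ ^ 2), mul_one]

lemma contDiff_Qcs (s : ℍ[ℝ]) {n : WithTop ℕ∞} : ContDiff ℝ n (Qcs s) := by
  rw [funext (Qcs_eq_smul s)]
  have h : ContDiff ℝ n fun y : ℍ[ℝ] => (inner ℝ (1 : ℍ[ℝ]) y : ℝ) :=
    contDiff_const.inner ℝ contDiff_id
  have h' : ContDiff ℝ n fun y : ℍ[ℝ] => (inner ℝ y y : ℝ) := contDiff_id.inner ℝ contDiff_id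
  exact (contDiff_const.sub ((contDiff_const.mul h).smul contDiff_const)).add
    (h'.smul contDiff_const)

lemma isOpen_Qcs_ne_zero (s : ℍ[ℝ]) : IsOpen {y : ℍ[ℝ] | Qcs s y ≠ 0} :=
  isOpen_ne_fun (contDiff_Qcs s (n := 0)).continuous continuous_const

lemma contDiffAt_Qcs_inv {s x : ℍ[ℝ]} (hx : Qcs s x ≠ 0) {n : WithTop ℕ∞} :
    ContDiffAt ℝ n (fun y => (Qcs s y)⁻¹) x := by
  have h := contDiffAt_ringInverse ℝ (n := n) (Units.mk0 _ hx)
  simp only [Ring.inverse_eq_inv', Units.val_mk0] at h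
  exact h.comp x (contDiff_Qcs s).contDiffAt

instance Quaternion.instStarModuleReal : StarModule ℝ ℍ[ℝ] := ⟨fun r q => by simp⟩

lemma contDiff_sub_star (s : ℍ[ℝ]) {n : WithTop ℕ∞} :
    ContDiff ℝ n (fun y : ℍ[ℝ] => s - star y) :=
  contDiff_const.sub (starL' ℝ : ℍ[ℝ] ≃L[ℝ] ℍ[ℝ]).contDiff

lemma fderiv_Qcs_apply (s y e : ℍ[ℝ]) : fderiv ℝ (Qcs s) y e = QcsDir s y e := by
  have h1 : HasFDerivAt (fun y : ℍ[ℝ] => (inner ℝ (1 : ℍ[ℝ]) y : ℝ)) _ y :=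
    (hasFDerivAt_const (1 : ℍ[ℝ]) y).inner ℝ (hasFDerivAt_id y)
  have h2 : HasFDerivAt (fun y : ℍ[ℝ] => (inner ℝ y y : ℝ)) _ y :=
    (hasFDerivAt_id y).inner ℝ (hasFDerivAt_id y)
  have h := (((h1.const_mul 2).smul_const s).const_sub (s ^ 2)).add (h2.smul_const (1 : ℍ[ℝ]))
  have h' := h.congr_of_eventuallyEq (f₁ := Qcs s) (.of_forall (Qcs_eq_smul s))
  have hre : (inner ℝ (1 : ℍ[ℝ]) e : ℝ) = e.re := by simp [Quaternion.inner_def]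
  rw [h'.fderiv, QcsDir]
  simp [hre, real_inner_comm y e]
  module

lemma fderiv_Qcs_inv_apply {s x : ℍ[ℝ]} (hx : Qcs s x ≠ 0) (e : ℍ[ℝ]) :
    fderiv ℝ (fun y => (Qcs s y)⁻¹) x e
      = -((Qcs s x)⁻¹ * QcsDir s x e * (Qcs s x)⁻¹) := by
  have h := (hasFDerivAt_inv' (𝕜 := ℝ) hx).comp x
    ((contDiff_Qcs s (n := 1)).differentiable one_ne_zero x).hasFDerivAt
  rw [← fderiv_Qcs_apply]
  exact congrArg (· e) h.fderiv

lemma fderiv_sub_star_apply (s x e : ℍ[ℝ]) :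
    fderiv ℝ (fun y : ℍ[ℝ] => s - star y) x e = -star e := by
  have h := (hasFDerivAt_id (𝕜 := ℝ) x).star.const_sub s
  rw [show (fun y : ℍ[ℝ] => s - star y) = fun y => s - star (id y) from rfl, h.fderiv]
  simp

lemma hasFDerivAt_QcsDir (s x e : ℍ[ℝ]) :
    HasFDerivAt (fun y => QcsDir s y e) (((2 : ℝ) • innerSL ℝ e).smulRight (1 : ℍ[ℝ])) x := by
  have h := (((2 : ℝ) • innerSL ℝ e).smulRight (1 : ℍ[ℝ])).hasFDerivAt (x := x)
  have h' := h.sub_const ((2 * e.re) • s)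
  refine h'.congr_of_eventuallyEq (.of_forall fun y => ?_)
  simp [QcsDir, real_inner_comm y e]

lemma commute_QcsDir_Qcs (s x e : ℍ[ℝ]) : Commute (QcsDir s x e) (Qcs s x) := by
  rw [Qcs_eq_smul, QcsDir]
  have h : ∀ a b : ℝ, Commute (a • (1 : ℍ[ℝ]) - b • s) s := fun a b =>
    ((Commute.one_left s).smul_left a).sub_left ((Commute.refl s).smul_left b)
  exact (((h _ _).pow_right 2).sub_right ((h _ _).smul_right _)).add_right
    ((Commute.one_right _).smul_right _)

lemma fderiv_mul_apply {f g : ℍ[ℝ] → ℍ[ℝ]} {x : ℍ[ℝ]} (hf : DifferentiableAt ℝ f x)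
    (hg : DifferentiableAt ℝ g x) (e : ℍ[ℝ]) :
    fderiv ℝ (fun y => f y * g y) x e = f x * fderiv ℝ g x e + fderiv ℝ f x e * g x := by
  have h : HasFDerivAt (fun y => f y * g y) _ x := hf.hasFDerivAt.mul' hg.hasFDerivAt
  rw [h.fderiv]
  simp

lemma fderiv_kernel_apply {s x : ℍ[ℝ]} (hx : Qcs s x ≠ 0) (e : ℍ[ℝ]) :
    fderiv ℝ (fun y => (s - star y) * (Qcs s y)⁻¹) x e
      = (s - star x) * -((Qcs s x)⁻¹ * QcsDir s x e * (Qcs s x)⁻¹)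
        + -star e * (Qcs s x)⁻¹ := by
  rw [fderiv_mul_apply ((contDiff_sub_star s (n := 1)).differentiable one_ne_zero x)
    ((contDiffAt_Qcs_inv hx (n := 1)).differentiableAt one_ne_zero), fderiv_Qcs_inv_apply hx,
    fderiv_sub_star_apply]

lemma fderiv_fderiv_kernel_apply {s x : ℍ[ℝ]} (hx : Qcs s x ≠ 0) (e : ℍ[ℝ]) :
    fderiv ℝ (fun y => fderiv ℝ (fun y => (s - star y) * (Qcs s y)⁻¹) y e) x e
      = (2 * (star e * QcsDir s x e)
          + (s - star x) * (2 * (QcsDir s x e * QcsDir s x e) * (Qcs s x)⁻¹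
            - ((2 * inner ℝ e e : ℝ) : ℍ[ℝ]))) * ((Qcs s x)⁻¹ * (Qcs s x)⁻¹) := by
  have hev : (fun y => fderiv ℝ (fun y => (s - star y) * (Qcs s y)⁻¹) y e) =ᶠ[nhds x]
      fun y => (s - star y) * -((Qcs s y)⁻¹ * QcsDir s y e * (Qcs s y)⁻¹)
        + -star e * (Qcs s y)⁻¹ :=
    Filter.eventuallyEq_of_mem ((isOpen_Qcs_ne_zero s).mem_nhds hx)
      fun y hy => fderiv_kernel_apply hy e
  have hP : DifferentiableAt ℝ (fun y : ℍ[ℝ] => s - star y) x :=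
    (contDiff_sub_star s (n := 1)).differentiable one_ne_zero x
  have hI : DifferentiableAt ℝ (fun y => (Qcs s y)⁻¹) x :=
    (contDiffAt_Qcs_inv hx (n := 1)).differentiableAt one_ne_zero
  have hD := hasFDerivAt_QcsDir s x e
  have hID : DifferentiableAt ℝ (fun y => (Qcs s y)⁻¹ * QcsDir s y e) x :=
    hI.mul hD.differentiableAt
  have hIDI : DifferentiableAt ℝ (fun y => (Qcs s y)⁻¹ * QcsDir s y e * (Qcs s y)⁻¹) x :=
    hID.mul hI
  have hc : (Qcs s x)⁻¹ * QcsDir s x e = QcsDir s x e * (Qcs s x)⁻¹ :=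
    ((commute_QcsDir_Qcs s x e).inv_right₀).eq.symm
  have hDe : fderiv ℝ (fun y => QcsDir s y e) x e = ((2 * inner ℝ e e : ℝ) : ℍ[ℝ]) := by
    rw [hD.fderiv, ← mul_one ((2 * inner ℝ e e : ℝ) : ℍ[ℝ]), Quaternion.coe_mul_eq_smul]
    simp
  have hr := Quaternion.coe_commutes (2 * inner ℝ e e : ℝ) (Qcs s x)⁻¹
  rw [hev.fderiv_eq, fderiv_fun_add (hP.fun_mul hIDI.fun_neg) ((differentiableAt_const _).fun_mul hI),
    add_apply, fderiv_mul_apply hP hIDI.fun_neg,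
    fderiv_mul_apply (differentiableAt_const _) hI, fderiv_fun_neg, neg_apply,
    fderiv_mul_apply hID hI, fderiv_mul_apply hI hD.differentiableAt, fderiv_Qcs_inv_apply hx,
    fderiv_sub_star_apply, hDe]
  generalize ((2 * inner ℝ e e : ℝ) : ℍ[ℝ]) = r at *
  generalize (Qcs s x)⁻¹ = c at *
  generalize QcsDir s x e = L at *
  have hc' (z : ℍ[ℝ]) : c * (L * z) = L * (c * z) := by rw [← mul_assoc, hc, mul_assoc]
  simp only [fderiv_fun_const, mul_assoc, hc, hc', ← hr, mul_add, add_mul, mul_sub, sub_mul,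
    mul_neg, neg_mul, two_mul, Pi.zero_apply, zero_apply, zero_mul]
  abel

lemma inner_eq_components (a b : ℍ[ℝ]) :
    (inner ℝ a b : ℝ) = a.re * b.re + a.imI * b.imI + a.imJ * b.imJ + a.imK * b.imK := by
  simp [Quaternion.inner_def]

lemma qi_components : qi.re = 0 ∧ qi.imI = 1 ∧ qi.imJ = 0 ∧ qi.imK = 0 := ⟨rfl, rfl, rfl, rfl⟩

lemma qj_components : qj.re = 0 ∧ qj.imI = 0 ∧ qj.imJ = 1 ∧ qj.imK = 0 := ⟨rfl, rfl, rfl, rfl⟩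

lemma qk_components : qk.re = 0 ∧ qk.imI = 0 ∧ qk.imJ = 0 ∧ qk.imK = 1 := ⟨rfl, rfl, rfl, rfl⟩

lemma star_mul_QcsDir_sum (s x : ℍ[ℝ]) :
    star 1 * QcsDir s x 1 + star qi * QcsDir s x qi + star qj * QcsDir s x qj
      + star qk * QcsDir s x qk = -2 * (s - star x) := by
  have h2 : (2 : ℍ[ℝ]) = ((2 : ℝ) : ℍ[ℝ]) := by norm_cast
  rw [h2]
  ext <;>
    simp [QcsDir, qi_components, qj_components, qk_components, inner_eq_components] <;> ring

lemma QcsDir_mul_self_sum (s x : ℍ[ℝ]) :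
    QcsDir s x 1 * QcsDir s x 1 + QcsDir s x qi * QcsDir s x qi + QcsDir s x qj * QcsDir s x qj
      + QcsDir s x qk * QcsDir s x qk = 4 * Qcs s x := by
  have h4 : (4 : ℍ[ℝ]) = ((4 : ℝ) : ℍ[ℝ]) := by norm_cast
  rw [h4, Qcs_eq_smul]
  ext <;>
    simp [QcsDir, qi_components, qj_components, qk_components, inner_eq_components, pow_two,
      -inner_self_eq_norm_sq_to_K] <;>
    ring

/-- Let `S(y) = (s − ȳ)·Q_{c,s}(y)⁻¹` be the left slice-hyperholomorphic Cauchy kernel in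
form II.  On the open set `U = {y : Q_{c,s}(y) ≠ 0}` the function `S` is infinitely
differentiable, and for every `x ∈ U` its Laplacian equals
`−4·(s − x̄)·Q_{c,s}(x)^{−2}`. -/
theorem statement13 (s : ℍ[ℝ]) :
    IsOpen {y : ℍ[ℝ] | Qcs s y ≠ 0} ∧
    ContDiffOn ℝ (⊤ : ℕ∞) (fun y => (s - star y) * (Qcs s y)⁻¹) {y : ℍ[ℝ] | Qcs s y ≠ 0} ∧
    ∀ x ∈ {y : ℍ[ℝ] | Qcs s y ≠ 0},
      lap (fun y => (s - star y) * (Qcs s y)⁻¹) x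
        = (-4 : ℍ[ℝ]) * ((s - star x) * Qcs s x ^ (-2 : ℤ)) := by
  refine ⟨isOpen_Qcs_ne_zero s, fun x hx =>
    ((contDiff_sub_star s).contDiffAt.mul (contDiffAt_Qcs_inv hx)).contDiffWithinAt,
    fun x hx => ?_⟩
  have hx : Qcs s x ≠ 0 := hx
  have hinv : Qcs s x * (Qcs s x)⁻¹ = 1 := mul_inv_cancel₀ hx
  have hpow : Qcs s x ^ (-2 : ℤ) = (Qcs s x)⁻¹ * (Qcs s x)⁻¹ := by
    rw [zpow_neg, ← inv_zpow, zpow_ofNat, pow_two]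
  have hone : (inner ℝ (1 : ℍ[ℝ]) 1 : ℝ) = 1 := by simp
  have hi : (inner ℝ qi qi : ℝ) = 1 := by rw [inner_eq_components]; simp [qi_components]
  have hj : (inner ℝ qj qj : ℝ) = 1 := by rw [inner_eq_components]; simp [qj_components]
  have hk : (inner ℝ qk qk : ℝ) = 1 := by rw [inner_eq_components]; simp [qk_components]
  have hsum := star_mul_QcsDir_sum s x
  have hsq := QcsDir_mul_self_sum s x
  have h2 : ((2 * 1 : ℝ) : ℍ[ℝ]) = 2 := by norm_num; norm_cast
  simp only [lap, fderiv_fderiv_kernel_apply hx, hpow, hone, hi, hj, hk, h2]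
  calc
    _ = (2 * (star 1 * QcsDir s x 1 + star qi * QcsDir s x qi + star qj * QcsDir s x qj
          + star qk * QcsDir s x qk)
        + (s - star x) * (2 * (QcsDir s x 1 * QcsDir s x 1 + QcsDir s x qi * QcsDir s x qi
          + QcsDir s x qj * QcsDir s x qj + QcsDir s x qk * QcsDir s x qk) * (Qcs s x)⁻¹ - 8))
        * ((Qcs s x)⁻¹ * (Qcs s x)⁻¹) := by
      noncomm_ring
    _ = _ := by
      rw [hsum, hsq, mul_assoc 2, mul_assoc 4, hinv]
      noncomm_ring
end
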